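/- arXiv:2403.13688 — 3 statements merged into one kernel-verified Lean document; each statement's English description precedes it below -/
import Mathlib

section
/- Under assumptions (A1)–(A4), argmax Ψ = argmin Φ_{1/p*}; that is, a point x ∈ E maximizes Ψ over E if and only if x minimizes Φ_{1/p*} over E. -/
/-!
Write `p` for the optimal value `p*`; the dual is taken for the objective `f / p`, whose optimal
value is `1`. Two sublevel sets at level `1` decide everything.

* `(f / p)^Γ y ≤ 1` holds exactly when `p ≤ f y` (`radTrans_le_one_iff`). Since `f` is positive at
  the reference point `e`, concavity gives `f (e + (y - e) / v) > p / v` for every `v > 1` as soon as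
  `p ≤ f y`. In the other direction, `f y < p` propagates by upper semicontinuity to
  `f (e + (y - e) / v) ≤ p / v` for some `v` slightly above `1`.
* `φ_𝒮 y ≤ 1` holds exactly when `y ∈ 𝒮` (`phiS_le_one_iff`), because the Slater point lets every
  point of either set be approached along a segment inside `int 𝒮 = {φ_𝒮 < 1}`.

Hence the dual function is `≤ 1` exactly at the feasible points with `f y ≥ p`, i.e. at the primal
maximizers. A dual value `< 1` would force a feasible `y` with `f y > p`, so the dual optimal value
is `1`, and it is attained at `x*`.
-/


open Set Filter Topology Classical

noncomputable section

namespace MultiRadial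

variable {E : Type*} [NormedAddCommGroup E] [InnerProductSpace ℝ E] [FiniteDimensional ℝ E]

/-- The hypograph of an extended-positive-real-valued function `f`:
`{(x,u) ∈ E × ℝ | 0 < u ≤ f x}`.  `f` is "concave" iff this set is convex. -/
def hypo (f : E → ENNReal) : Set (E × ℝ) :=
  {p : E × ℝ | 0 < p.2 ∧ ENNReal.ofReal p.2 ≤ f p.1}

/-- The effective domain `dom f = {x | 0 < f x < ∞}`. -/
def edom (f : E → ENNReal) : Set E := {x | f x ≠ 0 ∧ f x ≠ ⊤}

/-- The radial transformation `f^{Γ,e}(y) = sup {v > 0 | v * f (e + (y-e)/v) ≤ 1}`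
(with `sup ∅ = 0`). -/
def radTrans (f : E → ENNReal) (e y : E) : ENNReal :=
  ⨆ v ∈ {v : ℝ | 0 < v ∧ ENNReal.ofReal v * f (e + v⁻¹ • (y - e)) ≤ 1}, ENNReal.ofReal v

/-- The gauge of `S` with respect to `e`: `γ_{S,e}(x) = inf {v > 0 | e + (x-e)/v ∈ S}`. -/
def gaugeFrom (S : Set E) (e x : E) : ℝ :=
  sInf {v : ℝ | 0 < v ∧ e + v⁻¹ • (x - e) ∈ S}

/-- The interior radius of `S` with respect to `e`: `R_e(S) = inf {‖x - e‖ | x ∉ S}`. -/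
def innerRadius (S : Set E) (e : E) : ℝ :=
  sInf ((fun x => ‖x - e‖) '' Sᶜ)

/-- The nonstandard indicator `ι̂_S` taking value `∞` on `S` and `0` elsewhere. -/
def indic (S : Set E) (x : E) : ENNReal := if x ∈ S then ⊤ else 0

/-- The data of the multiradial setting: objective `f`, constraint sets `S j`,
a candidate convex identifier `phiS`, the objective reference point `e0`,
a primal optimal solution `xstar`, and a Slater point `xSL`. -/
structure Setup (E : Type*) [NormedAddCommGroup E] [InnerProductSpace ℝ E] (m : ℕ) where
  f : E → ENNReal
  S : Fin m → Set E
  phiS : E → ℝ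
  e0 : E
  xstar : E
  xSL : E

variable {m : ℕ}

/-- `S0 = cl (dom f)`. -/
def Setup.S0 (P : Setup E m) : Set E := closure (edom P.f)

/-- The feasible region `𝒮 = ⋂ j, S j`. -/
def Setup.feas (P : Setup E m) : Set E := ⋂ j, P.S j

/-- `D0 = D(S0)`, the diameter of `S0`. -/
def Setup.D0 (P : Setup E m) : ℝ := Metric.diam P.S0

/-- `R0 = R_{e0}(S0)`. -/
def Setup.R0 (P : Setup E m) : ℝ := innerRadius P.S0 P.e0

/-- The primal function `Ψ(x) = min {f x, ι̂_𝒮 x}`. -/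
def Setup.Psi (P : Setup E m) (x : E) : ENNReal := min (P.f x) (indic P.feas x)

/-- The primal optimal value `p* = sup Ψ`. -/
def Setup.pStar (P : Setup E m) : ENNReal := ⨆ x, P.Psi x

/-- The multiradial dual function `Φ(y) = max {f^{Γ,e0} y, φ_𝒮 y}`. -/
def Setup.Phi (P : Setup E m) (y : E) : ENNReal :=
  max (radTrans P.f P.e0 y) (ENNReal.ofReal (P.phiS y))

/-- The dual optimal value `d* = inf Φ`. -/
def Setup.dStar (P : Setup E m) : ENNReal := ⨅ y, P.Phi y

/-- `η = (1 - γ_{S0,e0}(x*)) * (1 - φ_𝒮(x_SL))`. -/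
def Setup.eta (P : Setup E m) : ℝ :=
  (1 - gaugeFrom P.S0 P.e0 P.xstar) * (1 - P.phiS P.xSL)

/-- `ρ = R0 / (D0 + R0)`. -/
def Setup.rho (P : Setup E m) : ℝ := P.R0 / (P.D0 + P.R0)

/-- The rescaled primal function `Ψ_τ(x) = min {τ * f x, ι̂_𝒮 x}`. -/
def Setup.PsiT (P : Setup E m) (τ : ℝ) (x : E) : ENNReal :=
  min (ENNReal.ofReal τ * P.f x) (indic P.feas x)

/-- The rescaled multiradial dual function `Φ_τ(y) = max {(τ f)^{Γ,e0} y, φ_𝒮 y}`. -/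
def Setup.PhiT (P : Setup E m) (τ : ℝ) (y : E) : ENNReal :=
  max (radTrans (fun x => ENNReal.ofReal τ * P.f x) P.e0 y) (ENNReal.ofReal (P.phiS y))

/-- `p(τ) = sup Ψ_τ`. -/
def Setup.pVal (P : Setup E m) (τ : ℝ) : ENNReal := ⨆ x, P.PsiT τ x

/-- `d(τ) = inf Φ_τ`. -/
def Setup.dVal (P : Setup E m) (τ : ℝ) : ENNReal := ⨅ y, P.PhiT τ y

/-- `c_τ = (η / p(τ)) * R0 / (D0 + R0)`. -/
def Setup.cVal (P : Setup E m) (τ : ℝ) : ℝ :=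
  P.eta / (P.pVal τ).toReal * (P.R0 / (P.D0 + P.R0))

/-- Standing assumptions (A1)-(A4). -/
structure Assumptions (P : Setup E m) : Prop where
  /-- (A1) `f` is concave (its hypograph is convex). -/
  concave : Convex ℝ (hypo P.f)
  /-- (A1) `f` is upper semicontinuous. -/
  usc : UpperSemicontinuous P.f
  /-- (A1) `D0 = D(S0) < ∞`. -/
  diamFin : EMetric.diam P.S0 ≠ ⊤
  /-- (A2) each `S j` is closed. -/
  closedS : ∀ j, IsClosed (P.S j)
  /-- (A2) each `S j` is convex. -/
  convexS : ∀ j, Convex ℝ (P.S j)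
  /-- (A3) the identifier is lower semicontinuous. -/
  lscId : LowerSemicontinuous P.phiS
  /-- (A3) the identifier is convex. -/
  convexId : ConvexOn ℝ Set.univ P.phiS
  /-- (A3) `int 𝒮 = {x | φ_𝒮 x < 1}`. -/
  identifies : interior P.feas = {x | P.phiS x < 1}
  /-- (A3) `e0 ∈ int S0`. -/
  e0int : P.e0 ∈ interior P.S0
  /-- (A3) `R0 > 0`. -/
  R0pos : 0 < P.R0
  /-- (A4) `x* ∈ 𝒮`. -/
  xstarFeas : P.xstar ∈ P.feas
  /-- (A4) `f x* = p*`. -/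
  xstarOpt : P.f P.xstar = P.pStar
  /-- (A4) `p* > 0`. -/
  pStarPos : 0 < P.pStar
  /-- (A4) `p* < ∞`. -/
  pStarFin : P.pStar ≠ ⊤
  /-- (A4) `x_SL ∈ int 𝒮 ∩ dom f`. -/
  slater : P.xSL ∈ interior P.feas ∩ edom P.f
  /-- (A4) `η > 0`. -/
  etaPos : 0 < P.eta

/-- A convex set and its closure have the same interior in finite dimension, without assuming
that the interior is nonempty. -/
lemma interior_closure_subset_of_convex {s : Set E} (hs : Convex ℝ s) :
    interior (closure s) ⊆ interior s := by
  rcases (interior (closure s)).eq_empty_or_nonempty with h | h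
  · simp [h]
  -- Affine subspaces are closed here, so `s` and `closure s` have the same affine span.
  have hcl : closure s ⊆ (affineSpan ℝ s : Set E) :=
    closure_minimal (subset_affineSpan ℝ s) (AffineSubspace.closed_of_finiteDimensional _)
  have htop : affineSpan ℝ s = ⊤ := by
    have h1 := hs.closure.interior_nonempty_iff_affineSpan_eq_top.1 h
    exact top_le_iff.1 (h1 ▸ affineSpan_le.2 hcl)
  exact (hs.interior_closure_eq_interior_of_nonempty_interior
    (hs.interior_nonempty_iff_affineSpan_eq_top.2 htop)).subset

lemma exists_pos_ofReal_le {a : ENNReal} (ha : a ≠ 0) : ∃ u : ℝ, 0 < u ∧ ENNReal.ofReal u ≤ a := by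
  obtain ⟨b, hb0, hba⟩ := ENNReal.lt_iff_exists_nnreal_btwn.1 (pos_iff_ne_zero.2 ha)
  refine ⟨b, by exact_mod_cast hb0, ?_⟩
  rw [ENNReal.ofReal_coe_nnreal]
  exact hba.le

lemma convex_ne_zero {f : E → ENNReal} (hf : Convex ℝ (hypo f)) : Convex ℝ {x | f x ≠ 0} := by
  intro x hx y hy a b ha hb hab
  obtain ⟨u, hu, hux⟩ := exists_pos_ofReal_le hx
  obtain ⟨w, hw, hwy⟩ := exists_pos_ofReal_le hy
  have h := hf (x := (x, u)) ⟨hu, hux⟩ (y := (y, w)) ⟨hw, hwy⟩ ha hb hab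
  exact ((ENNReal.ofReal_pos.2 h.1).trans_le h.2).ne'

lemma ofReal_mul_inv_mul_le_one_iff {p v : ℝ} (hp : 0 < p) (hv : 0 < v) (a : ENNReal) :
    ENNReal.ofReal v * (ENNReal.ofReal p⁻¹ * a) ≤ 1 ↔ a ≤ ENNReal.ofReal (p / v) := by
  rw [← mul_assoc, ← ENNReal.ofReal_mul hv.le, mul_comm,
    ← ENNReal.le_div_iff_mul_le (Or.inl (by simp; positivity)) (Or.inl ENNReal.ofReal_ne_top),
    ← ENNReal.ofReal_one, ← ENNReal.ofReal_div_of_pos (by positivity)]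
  congr! 2
  field_simp

lemma le_radTrans {g : E → ENNReal} {e y : E} {v : ℝ} (hv : 0 < v)
    (h : ENNReal.ofReal v * g (e + v⁻¹ • (y - e)) ≤ 1) : ENNReal.ofReal v ≤ radTrans g e y :=
  le_iSup₂ (f := fun (v : ℝ) (_ : v ∈ {v : ℝ | 0 < v ∧
    ENNReal.ofReal v * g (e + v⁻¹ • (y - e)) ≤ 1}) => ENNReal.ofReal v) v ⟨hv, h⟩

/-- The sublevel set at level `1` of the radial transform of `f / p` is the superlevel set of `f`
at level `p`. -/
lemma radTrans_le_one_iff {f : E → ENNReal} (hf : Convex ℝ (hypo f)) (hu : UpperSemicontinuous f)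
    {e : E} (he : f e ≠ 0) {p : ℝ} (hp : 0 < p) (y : E) :
    radTrans (fun x => ENNReal.ofReal p⁻¹ * f x) e y ≤ 1 ↔ ENNReal.ofReal p ≤ f y := by
  constructor
  · intro h
    by_contra! hlt
    obtain ⟨c, hc, hcp⟩ := ENNReal.lt_iff_exists_nnreal_btwn.1 hlt
    have hcp' : (c : ℝ) < p := by
      rwa [← ENNReal.ofReal_coe_nnreal, ENNReal.ofReal_lt_ofReal_iff hp] at hcp
    have hinv : Tendsto (fun v : ℝ => v⁻¹) (𝓝 1) (𝓝 1) := by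
      simpa using tendsto_inv₀ (one_ne_zero (α := ℝ))
    have h1 : Tendsto (fun v : ℝ => e + v⁻¹ • (y - e)) (𝓝 1) (𝓝 y) := by
      simpa using (hinv.smul_const (y - e)).const_add e
    have h2 : Tendsto (fun v : ℝ => p / v) (𝓝 1) (𝓝 p) := by
      simpa [div_eq_mul_inv] using hinv.const_mul p
    have hev := ((h1.eventually (hu y _ hc)).and (h2.eventually (lt_mem_nhds hcp'))).filter_mono
      (nhdsWithin_le_nhds (s := Ioi 1))
    obtain ⟨v, ⟨hv1, hv2⟩, hv⟩ := (hev.and self_mem_nhdsWithin).exists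
    have hv : 1 < v := hv
    have hv0 : 0 < v := by linarith
    have hmem : ENNReal.ofReal v * (ENNReal.ofReal p⁻¹ * f (e + v⁻¹ • (y - e))) ≤ 1 := by
      rw [ofReal_mul_inv_mul_le_one_iff hp hv0]
      refine hv1.le.trans ?_
      rw [← ENNReal.ofReal_coe_nnreal]
      exact ENNReal.ofReal_le_ofReal hv2.le
    have hle : ENNReal.ofReal v ≤ 1 := (le_radTrans hv0 hmem).trans h
    rw [ENNReal.ofReal_le_one] at hle
    linarith
  · intro h
    refine iSup₂_le fun v hv => ?_
    obtain ⟨hv0, hmem⟩ := hv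
    rw [ofReal_mul_inv_mul_le_one_iff hp hv0] at hmem
    rw [ENNReal.ofReal_le_one]
    by_contra! hv1
    obtain ⟨u, hu0, hue⟩ := exists_pos_ofReal_le he
    have hvi : v⁻¹ < 1 := inv_lt_one_of_one_lt₀ hv1
    -- The convex combination of `(e, u)` and `(y, p)` lies strictly above height `p / v`.
    have hc := (hf (x := (e, u)) ⟨hu0, hue⟩ (y := (y, p)) ⟨hp, h⟩ (sub_nonneg.2 hvi.le)
      (inv_pos.2 hv0).le (by ring)).2
    have hpt : (1 - v⁻¹) • e + v⁻¹ • y = e + v⁻¹ • (y - e) := by module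
    simp only [Prod.fst_add, Prod.snd_add, Prod.smul_fst, Prod.smul_snd, hpt, smul_eq_mul] at hc
    have hle := hc.trans hmem
    rw [ENNReal.ofReal_le_ofReal_iff (by positivity), div_eq_mul_inv] at hle
    nlinarith [mul_pos (sub_pos.2 hvi) hu0]

lemma lt_of_radTrans_lt_one {f : E → ENNReal} {e : E} {p : ℝ} (hp : 0 < p) {y : E}
    (h : radTrans (fun x => ENNReal.ofReal p⁻¹ * f x) e y < 1) : ENNReal.ofReal p < f y := by
  by_contra! hle
  refine h.not_ge ?_
  have hmem : ENNReal.ofReal 1 *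
      (ENNReal.ofReal p⁻¹ * f (e + (1 : ℝ)⁻¹ • (y - e))) ≤ 1 := by
    rw [ofReal_mul_inv_mul_le_one_iff hp one_pos]
    simpa using hle
  simpa using le_radTrans one_pos hmem

lemma phiS_le_one_iff {P : Setup E m} (hP : Assumptions P) (y : E) :
    P.phiS y ≤ 1 ↔ y ∈ P.feas := by
  have hcl : IsClosed P.feas := isClosed_iInter hP.closedS
  have hcv : Convex ℝ P.feas := convex_iInter hP.convexS
  have hSL := hP.slater.1
  constructor
  · intro h
    -- By convexity, `φ_𝒮 < 1` on the open segment from the Slater point to `y`.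
    have hseg : openSegment ℝ P.xSL y ⊆ P.feas := by
      rintro _ ⟨a, b, ha, hb, hab, rfl⟩
      apply interior_subset
      rw [hP.identifies] at hSL ⊢
      have hSL : P.phiS P.xSL < 1 := hSL
      have := hP.convexId.2 (mem_univ P.xSL) (mem_univ y) ha.le hb.le hab
      simp only [smul_eq_mul] at this
      change P.phiS _ < 1
      nlinarith
    exact closure_minimal hseg hcl (segment_subset_closure_openSegment (right_mem_segment ..))
  · intro h
    have hsub : interior P.feas ⊆ P.phiS ⁻¹' Iic 1 := by
      rw [hP.identifies]
      exact fun x (hx : P.phiS x < 1) => hx.le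
    refine closure_minimal hsub (hP.lscId.isClosed_preimage 1) ?_
    rw [hcv.closure_interior_eq_closure_of_nonempty_interior ⟨_, hSL⟩]
    exact subset_closure h

lemma f_e0_ne_zero {P : Setup E m} (hP : Assumptions P) : P.f P.e0 ≠ 0 := by
  have h : P.e0 ∈ interior (closure {x | P.f x ≠ 0}) :=
    interior_mono (closure_mono fun _ hx => hx.1) hP.e0int
  exact interior_subset (interior_closure_subset_of_convex (convex_ne_zero hP.concave) h)

lemma pStar_le_Psi_iff {P : Setup E m} (hP : Assumptions P) (x : E) :
    P.pStar ≤ P.Psi x ↔ P.pStar ≤ P.f x ∧ x ∈ P.feas := by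
  rw [Setup.Psi, le_min_iff]
  by_cases h : x ∈ P.feas
  · simp [indic, h]
  · simp [indic, h, hP.pStarPos.ne']

/-- under (A1)-(A4), `argmax Ψ = argmin Φ_{1/p*}`. -/
theorem statement1 (P : Setup E m) (hP : Assumptions P) :
    {x : E | ∀ z, P.Psi z ≤ P.Psi x} =
      {x : E | ∀ z, P.PhiT (P.pStar.toReal)⁻¹ x ≤ P.PhiT (P.pStar.toReal)⁻¹ z} := by
  have hp0 : 0 < P.pStar.toReal := ENNReal.toReal_pos hP.pStarPos.ne' hP.pStarFin
  have hpp : ENNReal.ofReal P.pStar.toReal = P.pStar := ENNReal.ofReal_toReal hP.pStarFin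
  have hdual : ∀ x, P.PhiT (P.pStar.toReal)⁻¹ x ≤ 1 ↔ P.pStar ≤ P.Psi x := fun x => by
    rw [pStar_le_Psi_iff hP, Setup.PhiT, max_le_iff, ENNReal.ofReal_le_one, phiS_le_one_iff hP,
      radTrans_le_one_iff hP.concave hP.usc (f_e0_ne_zero hP) hp0, hpp]
  have hlow : ∀ x, 1 ≤ P.PhiT (P.pStar.toReal)⁻¹ x := fun x => by
    by_contra! hlt
    have h1 := lt_of_radTrans_lt_one hp0 ((le_max_left _ _).trans_lt hlt)
    have h2 := ((pStar_le_Psi_iff hP x).1 ((hdual x).1 hlt.le)).2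
    have h3 : P.Psi x ≤ P.pStar := le_iSup P.Psi x
    rw [Setup.Psi, indic, if_pos h2, min_top_right] at h3
    exact h3.not_gt (hpp ▸ h1)
  have hstar : P.pStar ≤ P.Psi P.xstar :=
    (pStar_le_Psi_iff hP _).2 ⟨hP.xstarOpt.ge, hP.xstarFeas⟩
  ext x
  simp only [mem_ofPred_eq]
  constructor
  · intro h z
    exact ((hdual x).2 (hstar.trans (h _))).trans (hlow z)
  · intro h z
    exact (le_iSup P.Psi z).trans ((hdual x).1 ((h _).trans ((hdual _).2 hstar)))

end MultiRadial
end
end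

section
/- Suppose hypo f is convex, f is u.s.c. on all of E, e0 ∈ dom f, and R0 := R_{e0}(S0) < ∞. If y ∈ E satisfies 0 ≤ f^{Γ,e0}(y) ≤ 1 and ‖y − e0‖ + f^{Γ,e0}(y)·R0 > 0, then f(y) − 1 ≥ (1 − f^{Γ,e0}(y))·R0/(‖y − e0‖ + f^{Γ,e0}(y)·R0). If moreover D0 := D(S0) < ∞ and f^{Γ,e0}(y) > 0, then f(y) ≥ 1 + (R0/(D0 + R0))·(1 − f^{Γ,e0}(y))/f^{Γ,e0}(y). -/
/-!
Write `g` for the radial transform of `f` at `y`, `d = ‖y - e0‖`, and `R` for the interior radius of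
the closure `S` of the domain.  Every `v > g` fails the defining condition of the transform, so
`f (e0 + v⁻¹ • (y - e0)) ≥ 1 / v`: the ray from `e0` through `y` meets the set where `f` is large.
On the opposite ray, `e0 - (R / d) • (y - e0)` has distance at most `R` from `e0`, hence lies in `S`.
For `g < v < 1` the point `y` lies on the segment between these two points, and concavity
(`le_comb`, where upper semicontinuity permits an endpoint in `S` with `f` bounded below
only by `0` there) gives `f y ≥ (d + R) / (d + v * R)`.  Letting `v ↓ g` proves the first inequality
(`first_bound`).  When `g = 1` no such `v` exists, but the claim reduces to `f y ≥ 1` (`one_le`).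

When `S` is bounded, `e0 + v⁻¹ • (y - e0)` lies in the domain for all `v > g`, because a concave
u.s.c. function that is finite at `e0` is finite everywhere (`ne_top`).  Hence `d ≤ g * diam S`,
and the second inequality follows from the first by monotonicity in `d`.
-/

open Set Filter Topology Classical

noncomputable section

namespace MultiRadial

variable {E : Type*} [NormedAddCommGroup E] [InnerProductSpace ℝ E] [FiniteDimensional ℝ E]

/-- Concavity between a point `x` where `f x ≥ c` and a point `z` of the closed domain, where `f` is
only known to be nonnegative: upper semicontinuity transfers the bound from the domain to its
closure. -/
theorem le_comb {f : E → ENNReal} (hconc : Convex ℝ (hypo f)) (husc : UpperSemicontinuous f)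
    {x z : E} {c l : ℝ} (hc : 0 < c) (hx : ENNReal.ofReal c ≤ f x)
    (hz : z ∈ closure (edom f)) (hl : 0 < l) (hl1 : l ≤ 1) :
    ENNReal.ofReal (l * c) ≤ f (l • x + (1 - l) • z) := by
  have hcl : IsClosed {w : E | ENNReal.ofReal (l * c) ≤ f (l • x + (1 - l) • w)} :=
    (husc.isClosed_preimage (ENNReal.ofReal (l * c))).preimage
      (show Continuous fun w : E => l • x + (1 - l) • w by fun_prop)
  refine closure_minimal (fun w hw => ?_) hcl hz
  have hpos : 0 < (f w).toReal := ENNReal.toReal_pos hw.1 hw.2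
  have h1 : (x, c) ∈ hypo f := ⟨hc, hx⟩
  have h2 : (w, (f w).toReal) ∈ hypo f := ⟨hpos, (ENNReal.ofReal_toReal hw.2).le⟩
  have h3 := (hconc h1 h2 hl.le (sub_nonneg.2 hl1) (by ring)).2
  refine le_trans (ENNReal.ofReal_le_ofReal ?_) h3
  have : 0 ≤ (1 - l) * (f w).toReal := mul_nonneg (by linarith) hpos.le
  simpa using this

/-- A concave u.s.c. function that is finite at one point of its domain is finite everywhere:
an infinite value at `x` propagates along the segment to `e0`. -/
theorem ne_top {f : E → ENNReal} {e0 : E} (hconc : Convex ℝ (hypo f))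
    (husc : UpperSemicontinuous f) (he0 : e0 ∈ edom f) (x : E) : f x ≠ ⊤ := by
  intro hx
  have hc : 0 < (f e0).toReal + 1 := by positivity
  have hlim : Tendsto (fun t : ℝ => t • x + (1 - t) • e0) (𝓝[>] 0) (𝓝 e0) := by
    have : Continuous fun t : ℝ => t • x + (1 - t) • e0 := by fun_prop
    simpa using (this.tendsto 0).mono_left nhdsWithin_le_nhds
  have hmem : e0 ∈ f ⁻¹' Ici (ENNReal.ofReal ((f e0).toReal + 1)) := by
    refine (husc.isClosed_preimage _).mem_of_tendsto hlim ?_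
    filter_upwards [Ioo_mem_nhdsGT (zero_lt_one (α := ℝ))] with t ht
    have := le_comb (l := t) (c := ((f e0).toReal + 1) / t) hconc husc (x := x)
      (div_pos hc ht.1) (by simp [hx]) (subset_closure he0) ht.1 ht.2.le
    rwa [mul_div_cancel₀ _ ht.1.ne'] at this
  have h : (f e0).toReal + 1 ≤ (f e0).toReal := (ENNReal.ofReal_le_iff_le_toReal he0.2).1 hmem
  linarith

theorem innerRadius_nonneg (S : Set E) (e : E) : 0 ≤ innerRadius S e :=
  Real.sInf_nonneg (by rintro _ ⟨x, -, rfl⟩; exact norm_nonneg _)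

theorem mem_of_norm_le_innerRadius {S : Set E} (hS : IsClosed S) {e z : E} (he : e ∈ S)
    (hz : ‖z - e‖ ≤ innerRadius S e) : z ∈ S := by
  rcases (innerRadius_nonneg S e).eq_or_lt with h0 | h0
  · rw [← h0, norm_le_zero_iff, sub_eq_zero] at hz
    exact hz ▸ he
  · have hball : Metric.ball e (innerRadius S e) ⊆ S := by
      intro w hw
      by_contra hwS
      rw [Metric.mem_ball, dist_eq_norm] at hw
      refine absurd (csInf_le ⟨0, ?_⟩ (mem_image_of_mem (fun x => ‖x - e‖) hwS)) (not_le.2 hw)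
      rintro _ ⟨x, -, rfl⟩
      exact norm_nonneg _
    refine closure_minimal hball hS ?_
    rw [closure_ball _ h0.ne', Metric.mem_closedBall, dist_eq_norm]
    exact hz

/-- Every `v` above the radial transform violates its defining condition. -/
theorem inv_le_of_radTrans_lt {f : E → ENNReal} {e y : E} (hy1 : radTrans f e y ≤ 1) {v : ℝ}
    (hv : (radTrans f e y).toReal < v) :
    ENNReal.ofReal v⁻¹ ≤ f (e + v⁻¹ • (y - e)) := by
  have hv0 : 0 < v := ENNReal.toReal_nonneg.trans_lt hv
  have h : ¬ ENNReal.ofReal v * f (e + v⁻¹ • (y - e)) ≤ 1 := by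
    intro h
    have h1 : ENNReal.ofReal v ≤ radTrans f e y :=
      le_iSup₂_of_le (f := fun (v : ℝ)
        (_ : v ∈ {v : ℝ | 0 < v ∧ ENNReal.ofReal v * f (e + v⁻¹ • (y - e)) ≤ 1}) =>
          ENNReal.ofReal v) v ⟨hv0, h⟩ le_rfl
    exact absurd ((ENNReal.ofReal_le_iff_le_toReal (ne_top_of_le_ne_top ENNReal.one_ne_top hy1)).1 h1)
      (not_le.2 hv)
  rw [ENNReal.ofReal_inv_of_pos hv0]
  rw [ENNReal.inv_le_iff_le_mul (fun _ => by simpa using hv0) (by simp)]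
  exact (not_le.1 h).le

/-- The weaker bound `1 ≤ f y`, which covers the cases where the transform equals `1` or the interior
radius vanishes. -/
theorem one_le {f : E → ENNReal} {e0 y : E} (hconc : Convex ℝ (hypo f))
    (husc : UpperSemicontinuous f) (he0 : e0 ∈ edom f) (hy1 : radTrans f e0 y ≤ 1) : 1 ≤ f y := by
  have hg1 : (radTrans f e0 y).toReal ≤ 1 := by
    simpa using ENNReal.toReal_mono ENNReal.one_ne_top hy1
  rcases hg1.lt_or_eq with hg | hg
  · obtain ⟨v, hgv, hv1⟩ := exists_between hg
    have hv0 : 0 < v := ENNReal.toReal_nonneg.trans_lt hgv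
    have h := le_comb hconc husc (inv_pos.2 hv0) (inv_le_of_radTrans_lt hy1 hgv)
      (subset_closure he0) hv0 hv1.le
    have hpt : v • (e0 + v⁻¹ • (y - e0)) + (1 - v) • e0 = y := by
      rw [smul_add, smul_inv_smul₀ hv0.ne', sub_smul, one_smul]
      abel
    rwa [hpt, mul_inv_cancel₀ hv0.ne', ENNReal.ofReal_one] at h
  -- Here no `v < 1` is available, and `1 / v ≤ f (e0 + v⁻¹ • (y - e0))` is used as `v ↓ 1`.
  · have hlim : Tendsto (fun w : ℝ => e0 + w • (y - e0)) (𝓝[<] 1) (𝓝 y) := by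
      have : Continuous fun w : ℝ => e0 + w • (y - e0) := by fun_prop
      simpa using (this.tendsto 1).mono_left nhdsWithin_le_nhds
    have hb : Tendsto (fun w : ℝ => ENNReal.ofReal w) (𝓝[<] 1) (𝓝 1) := by
      simpa using (ENNReal.continuous_ofReal.tendsto 1).mono_left nhdsWithin_le_nhds
    refine le_of_forall_lt fun c hc => ?_
    obtain ⟨c', hcc', hc'⟩ := exists_between hc
    refine hcc'.trans_le ((husc.isClosed_preimage c').mem_of_tendsto hlim ?_)
    filter_upwards [Ioo_mem_nhdsLT (zero_lt_one (α := ℝ)), hb.eventually (lt_mem_nhds hc')]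
      with w hw hwc
    have h := inv_le_of_radTrans_lt (v := w⁻¹) hy1 (by rw [hg]; exact (one_lt_inv₀ hw.1).2 hw.2)
    rw [inv_inv] at h
    exact hwc.le.trans h

/-- The first inequality: concavity along the segment from `e0 + v⁻¹ • (y - e0)` through `y` to the
antipodal point of `closure (edom f)` at distance at most the interior radius, as `v` decreases to
the transform. -/
theorem first_bound {f : E → ENNReal} {e0 y : E} (hconc : Convex ℝ (hypo f))
    (husc : UpperSemicontinuous f) (he0 : e0 ∈ edom f) (hy1 : radTrans f e0 y ≤ 1)
    (hpos : 0 < ‖y - e0‖ + (radTrans f e0 y).toReal * innerRadius (closure (edom f)) e0) :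
    ENNReal.ofReal (1 +
        (1 - (radTrans f e0 y).toReal) * innerRadius (closure (edom f)) e0 /
          (‖y - e0‖ + (radTrans f e0 y).toReal * innerRadius (closure (edom f)) e0)) ≤ f y := by
  have hg1 : (radTrans f e0 y).toReal ≤ 1 := by
    simpa using ENNReal.toReal_mono ENNReal.one_ne_top hy1
  have hg0 : 0 ≤ (radTrans f e0 y).toReal := ENNReal.toReal_nonneg
  rcases hg1.lt_or_eq with hg | hg
  swap
  · simpa [hg] using one_le hconc husc he0 hy1
  have hstep := fun v => inv_le_of_radTrans_lt (f := f) (v := v) hy1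
  have hR := innerRadius_nonneg (closure (edom f)) e0
  have hball := fun z => mem_of_norm_le_innerRadius (z := z) (isClosed_closure (s := edom f))
    (subset_closure he0)
  generalize (radTrans f e0 y).toReal = g at *
  generalize innerRadius (closure (edom f)) e0 = R at *
  have hd := norm_nonneg (y - e0)
  have hd0 : ‖y - e0‖ = 0 → y - e0 = 0 := norm_eq_zero.1
  have hz : ‖(e0 - (R / ‖y - e0‖) • (y - e0)) - e0‖ ≤ R := by
    rw [sub_sub_cancel_left, norm_neg, norm_smul, Real.norm_of_nonneg (by positivity)]
    rcases hd.eq_or_lt with h | h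
    · rw [← h]; simpa using hR
    · rw [div_mul_cancel₀ _ h.ne']
  have hzS := hball _ hz
  have hkey : ∀ v, g < v → v < 1 →
      ENNReal.ofReal ((‖y - e0‖ + R) / (‖y - e0‖ + v * R)) ≤ f y := by
    intro v hgv hv1
    have hv0 : 0 < v := hg0.trans_lt hgv
    have hden : 0 < ‖y - e0‖ + v * R := by nlinarith
    have hnum : 0 < ‖y - e0‖ + R := by nlinarith
    -- The weight `l` solves `l / v - (1 - l) * R / ‖y - e0‖ = 1`.
    have h := le_comb (l := v * (‖y - e0‖ + R) / (‖y - e0‖ + v * R)) hconc husc (inv_pos.2 hv0)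
      (hstep v hgv) hzS (by positivity) ((div_le_one hden).2 (by nlinarith))
    have hc : v * (‖y - e0‖ + R) / (‖y - e0‖ + v * R) * v⁻¹
        = (‖y - e0‖ + R) / (‖y - e0‖ + v * R) := by
      field_simp
    have hpt : (v * (‖y - e0‖ + R) / (‖y - e0‖ + v * R)) • (e0 + v⁻¹ • (y - e0)) +
        (1 - v * (‖y - e0‖ + R) / (‖y - e0‖ + v * R)) • (e0 - (R / ‖y - e0‖) • (y - e0)) = y := by
      set l := v * (‖y - e0‖ + R) / (‖y - e0‖ + v * R) with hl
      have e1 : l • (e0 + v⁻¹ • (y - e0)) + (1 - l) • (e0 - (R / ‖y - e0‖) • (y - e0))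
          = e0 + (l * v⁻¹ - (1 - l) * (R / ‖y - e0‖)) • (y - e0) := by
        module
      rw [e1]
      rcases hd.eq_or_lt with h | h
      · rw [hd0 h.symm, smul_zero, add_zero]
        exact (sub_eq_zero.1 (hd0 h.symm)).symm
      · have : l * v⁻¹ - (1 - l) * (R / ‖y - e0‖) = 1 := by
          rw [hl]
          field_simp
          ring
        rw [this, one_smul]
        abel
    rwa [hc, hpt] at h
  have heq : 1 + (1 - g) * R / (‖y - e0‖ + g * R) = (‖y - e0‖ + R) / (‖y - e0‖ + g * R) := by
    field_simp
    ring
  rw [heq]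
  have hlim : Tendsto (fun v : ℝ => ENNReal.ofReal ((‖y - e0‖ + R) / (‖y - e0‖ + v * R))) (𝓝[>] g)
      (𝓝 (ENNReal.ofReal ((‖y - e0‖ + R) / (‖y - e0‖ + g * R)))) := by
    have : ContinuousAt (fun v : ℝ => (‖y - e0‖ + R) / (‖y - e0‖ + v * R)) g :=
      ContinuousAt.div (by fun_prop) (by fun_prop) hpos.ne'
    exact ENNReal.tendsto_ofReal (this.tendsto.mono_left nhdsWithin_le_nhds)
  refine le_of_tendsto hlim ?_
  filter_upwards [Ioo_mem_nhdsGT hg] with v hv using hkey v hv.1 hv.2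

/-- Lemma 2 of the paper: suppose `hypo f` is convex, `f` is u.s.c. on `E`,
`e0 ∈ dom f`, and `R0 = R_{e0}(S0) < ∞` (i.e. the complement of `S0` is nonempty).
If `0 ≤ f^{Γ,e0}(y) ≤ 1` and `‖y - e0‖ + f^{Γ,e0}(y) R0 > 0`, then
`f(y) - 1 ≥ (1 - f^{Γ,e0}(y)) R0 / (‖y - e0‖ + f^{Γ,e0}(y) R0)`.
If moreover `D0 = D(S0) < ∞` and `f^{Γ,e0}(y) > 0`, then
`f(y) ≥ 1 + (R0/(D0+R0)) (1 - f^{Γ,e0}(y))/f^{Γ,e0}(y)`. -/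
theorem statement6 (f : E → ENNReal) (e0 : E)
    (hconc : Convex ℝ (hypo f)) (husc : UpperSemicontinuous f)
    (he0 : e0 ∈ edom f) (hR0fin : (closure (edom f))ᶜ.Nonempty)
    (y : E) (hy1 : radTrans f e0 y ≤ 1) :
    (0 < ‖y - e0‖ + (radTrans f e0 y).toReal * innerRadius (closure (edom f)) e0 →
      ENNReal.ofReal (1 +
          (1 - (radTrans f e0 y).toReal) * innerRadius (closure (edom f)) e0 /
            (‖y - e0‖ + (radTrans f e0 y).toReal * innerRadius (closure (edom f)) e0)) ≤
        f y) ∧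
    (EMetric.diam (closure (edom f)) ≠ ⊤ → 0 < radTrans f e0 y →
      ENNReal.ofReal (1 +
          innerRadius (closure (edom f)) e0 /
              (Metric.diam (closure (edom f)) + innerRadius (closure (edom f)) e0) *
            ((1 - (radTrans f e0 y).toReal) / (radTrans f e0 y).toReal)) ≤
        f y) := by
  refine ⟨first_bound hconc husc he0 hy1, fun hdiam hG => ?_⟩
  have hR := innerRadius_nonneg (closure (edom f)) e0
  have hg1 : (radTrans f e0 y).toReal ≤ 1 := by
    simpa using ENNReal.toReal_mono ENNReal.one_ne_top hy1
  have hg : 0 < (radTrans f e0 y).toReal :=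
    ENNReal.toReal_pos hG.ne' (ne_top_of_le_ne_top ENNReal.one_ne_top hy1)
  rcases hR.eq_or_lt with hR0 | hR0
  · rw [← hR0]
    simpa using one_le hconc husc he0 hy1
  have hdle : ‖y - e0‖ ≤ (radTrans f e0 y).toReal * Metric.diam (closure (edom f)) := by
    have hlim : Tendsto (fun v : ℝ => v * Metric.diam (closure (edom f)))
        (𝓝[>] (radTrans f e0 y).toReal)
        (𝓝 ((radTrans f e0 y).toReal * Metric.diam (closure (edom f)))) :=
      ((continuous_mul_const _).tendsto _).mono_left nhdsWithin_le_nhds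
    refine ge_of_tendsto hlim ?_
    filter_upwards [self_mem_nhdsWithin] with v hv
    have hv0 : 0 < v := hg.trans hv
    have hx : e0 + v⁻¹ • (y - e0) ∈ edom f := by
      refine ⟨fun h0 => ?_, ne_top hconc husc he0 _⟩
      have h := inv_le_of_radTrans_lt hy1 hv
      rw [h0, nonpos_iff_eq_zero, ENNReal.ofReal_eq_zero] at h
      exact absurd (inv_pos.2 hv0) (not_lt.2 h)
    have h := Metric.dist_le_diam_of_mem' hdiam (subset_closure hx) (subset_closure he0)
    rw [dist_eq_norm, add_sub_cancel_left, norm_smul, norm_inv, Real.norm_of_nonneg hv0.le,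
      inv_mul_le_iff₀ hv0] at h
    exact h
  have hD : 0 ≤ Metric.diam (closure (edom f)) := Metric.diam_nonneg
  have hpos : 0 < ‖y - e0‖ + (radTrans f e0 y).toReal * innerRadius (closure (edom f)) e0 := by
    positivity
  refine le_trans (ENNReal.ofReal_le_ofReal ?_) (first_bound hconc husc he0 hy1 hpos)
  rw [div_mul_div_comm, mul_comm (innerRadius (closure (edom f)) e0)]
  have hnum : 0 ≤ (1 - (radTrans f e0 y).toReal) * innerRadius (closure (edom f)) e0 :=
    mul_nonneg (by linarith) hR
  gcongr
  linarith

end MultiRadial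
end
end

section
/- Under assumptions (A1)–(A4), for any v̂ with γ_{S0,e0}(x*) < v̂ < 1 and any v ∈ [v̂, 1], one has f(e0 + (x* − e0)/v) ≥ ((v − v̂)/(v·(1 − v̂)))·p*. -/
/-!
The set `C = {f > 0}` is convex, being the projection of the convex hypograph, and `dom f ⊆ C`.
In finite dimensions a convex set and its closure have the same interior
(`interior_closure_eq_of_convex`), so `e0 ∈ int S0` forces `e0 ∈ int C`. Because the gauge of `x*`
lies strictly below `v̂`, some point of the ray from `e0` through `x*` lies in `S0` strictly beyond
`w = e0 + (x* - e0)/v̂`, whence `w ∈ int C` and `f w > 0` (`pos_at_vhat`). Finally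
`e0 + (x* - e0)/v` is the convex combination of `x*` and `w` in which `x*` has weight
`(v - v̂)/(v (1 - v̂))`, and concavity of `f` gives the bound after discarding the positive
contribution of `w`.
-/

open Set Filter Topology Classical

noncomputable section

namespace MultiRadial

variable {E : Type*} [NormedAddCommGroup E] [InnerProductSpace ℝ E] [FiniteDimensional ℝ E]

variable {m : ℕ}

/-- In finite dimensions a convex set with empty interior lies in a proper affine subspace, which is
closed, so its closure has empty interior as well. Hence no interior point is gained by taking the
closure. -/
theorem interior_closure_eq_of_convex {C : Set E} (hC : Convex ℝ C) :
    interior (closure C) = interior C := by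
  rcases (interior (closure C)).eq_empty_or_nonempty with h | h
  · rw [h]
    exact (subset_empty_iff.1 (h ▸ interior_mono subset_closure)).symm
  · refine hC.interior_closure_eq_interior_of_nonempty_interior ?_
    rw [hC.interior_nonempty_iff_affineSpan_eq_top]
    rw [hC.closure.interior_nonempty_iff_affineSpan_eq_top] at h
    rw [eq_top_iff, ← h]
    exact affineSpan_le.2 (closure_minimal (subset_affineSpan ℝ C)
      (AffineSubspace.closed_of_finiteDimensional _))

theorem exists_mem_hypo {f : E → ENNReal} {x : E} (hx : 0 < f x) : ∃ u : ℝ, (x, u) ∈ hypo f := by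
  obtain ⟨u, hu0, hu⟩ := ENNReal.lt_iff_exists_nnreal_btwn.1 hx
  exact ⟨u, by exact_mod_cast hu0, by simpa using hu.le⟩

theorem convex_pos {f : E → ENNReal} (hf : Convex ℝ (hypo f)) : Convex ℝ {x | 0 < f x} := by
  intro x hx y hy a b ha hb hab
  obtain ⟨u, hu⟩ := exists_mem_hypo hx
  obtain ⟨t, ht⟩ := exists_mem_hypo hy
  have h := hf hu ht ha hb hab
  exact (ENNReal.ofReal_pos.2 h.1).trans_le h.2

/-- The point at gauge level `vhat` lies strictly between `e0`, interior to `{f > 0}`, and a point of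
`S0` whose existence is what `gaugeFrom P.S0 P.e0 P.xstar < vhat` means. -/
theorem pos_at_vhat (P : Setup E m) (hP : Assumptions P) (vhat : ℝ)
    (h1 : gaugeFrom P.S0 P.e0 P.xstar < vhat) :
    0 < vhat ∧ 0 < P.f (P.e0 + vhat⁻¹ • (P.xstar - P.e0)) := by
  have hC := convex_pos hP.concave
  have hsub : edom P.f ⊆ {x | 0 < P.f x} := fun x hx => pos_iff_ne_zero.2 hx.1
  have he0 : P.e0 ∈ interior {x | 0 < P.f x} := by
    rw [← interior_closure_eq_of_convex hC]
    exact interior_mono (closure_mono hsub) hP.e0int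
  -- Level `1` is admissible in the gauge since `0 < f x* = p* < ∞`; without an admissible level
  -- the infimum would be the junk value `0`.
  have hne : {v : ℝ | 0 < v ∧ P.e0 + v⁻¹ • (P.xstar - P.e0) ∈ P.S0}.Nonempty := by
    refine ⟨1, one_pos, subset_closure ?_⟩
    have : P.e0 + (1 : ℝ)⁻¹ • (P.xstar - P.e0) = P.xstar := by simp
    rw [this]
    exact ⟨hP.xstarOpt ▸ hP.pStarPos.ne', hP.xstarOpt ▸ hP.pStarFin⟩
  obtain ⟨t, ⟨ht0, ht⟩, htv⟩ := exists_lt_of_csInf_lt hne h1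
  have hv0 : 0 < vhat := ht0.trans htv
  refine ⟨hv0, interior_subset (s := {x | 0 < P.f x}) ?_⟩
  refine hC.openSegment_interior_closure_subset_interior he0 (closure_mono hsub ht)
    ⟨1 - t / vhat, t / vhat, sub_pos.2 ((div_lt_one hv0).2 htv), div_pos ht0 hv0, by ring, ?_⟩
  have : vhat⁻¹ = t / vhat * t⁻¹ := by field_simp
  rw [this]
  module

/-- under (A1)-(A4), for any `v̂` with `γ_{S0,e0}(x*) < v̂ < 1` and any
`v ∈ [v̂, 1]`, one has `f(e0 + (x* - e0)/v) ≥ ((v - v̂)/(v(1 - v̂))) p*`. -/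
theorem statement16 (P : Setup E m) (hP : Assumptions P) (vhat v : ℝ)
    (h1 : gaugeFrom P.S0 P.e0 P.xstar < vhat) (h2 : vhat < 1)
    (h3 : vhat ≤ v) (h4 : v ≤ 1) :
    ENNReal.ofReal ((v - vhat) / (v * (1 - vhat)) * P.pStar.toReal) ≤
      P.f (P.e0 + v⁻¹ • (P.xstar - P.e0)) := by
  obtain ⟨hvhat, hw⟩ := pos_at_vhat P hP vhat h1
  obtain ⟨u, hu⟩ := exists_mem_hypo hw
  have hv : 0 < v := hvhat.trans_le h3
  have h2' : 0 < 1 - vhat := sub_pos.2 h2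
  have hp : (P.xstar, P.pStar.toReal) ∈ hypo P.f :=
    ⟨ENNReal.toReal_pos hP.pStarPos.ne' hP.pStarFin,
      by rw [ENNReal.ofReal_toReal hP.pStarFin]; exact hP.xstarOpt.ge⟩
  set a := (v - vhat) / (v * (1 - vhat)) with ha
  set b := vhat * (1 - v) / (v * (1 - vhat)) with hb
  have ha0 : 0 ≤ a := div_nonneg (sub_nonneg.2 h3) (mul_pos hv h2').le
  have hb0 : 0 ≤ b := div_nonneg (mul_nonneg hvhat.le (sub_nonneg.2 h4)) (mul_pos hv h2').le
  have hab : a + b = 1 := by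
    rw [ha, hb]
    field_simp
    ring
  have hpt : a • P.xstar + b • (P.e0 + vhat⁻¹ • (P.xstar - P.e0))
      = P.e0 + v⁻¹ • (P.xstar - P.e0) := by
    have hinv : v⁻¹ = a + b * vhat⁻¹ := by
      rw [ha, hb]
      field_simp
      ring
    rw [hinv, eq_sub_of_add_eq hab]
    module
  have h := (hP.concave hp hu ha0 hb0 hab).2
  simp only [Prod.fst_add, Prod.snd_add, Prod.smul_fst, Prod.smul_snd, smul_eq_mul, hpt] at h
  exact (ENNReal.ofReal_le_ofReal (le_add_of_nonneg_right (mul_nonneg hb0 hu.1.le))).trans h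

end MultiRadial
end
end
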